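/- Let B = {b_1 < … < b_v} ⊆ {0,…,s−1} be nonempty with |B| = v and let t > v be an integer. Suppose λ_0, …, λ_{ns−1} are pairwise distinct and the sv × sv matrix K_{0,B} := [K_{0,b_1}^(v) | … | K_{0,b_v}^(v)] is invertible. Then there exists an st × st matrix E over F_q such that: (i) E · [K_{0,b_1}^(t) | … | K_{0,b_v}^(t)] equals the block matrix with K_{0,B} on top and the s(t−v) × sv zero matrix below; and (ii) for every index i ∈ {0,…,ns−1} with i ∉ {bs + j : b ∈ B, j ∈ {0,…,s−1}}, there is an invertible s × s matrix F_i over F_q such that E · (I_s ⊗ L_i^(t)) equals the block matrix with I_s ⊗ L_i^(v) on top and F_i ⊗ L_i^(t−v) below. -/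

import Mathlib

open Matrix

/-- The `m`-th smallest element of the finite set `B ⊆ ℕ` (junk value `0` if `m ≥ |B|`). -/
def enum (B : Finset ℕ) (m : ℕ) : ℕ := (B.sort (· ≤ ·)).getD m 0

/-- The `z`-th entry of the `(i,j)` block (a length-`t` column vector, `0 ≤ z < t`) of the
kernel matrix `K_{0,b}^{(t)}`: it is `λ_{bs+j}^z` if `i = j`, `−λ_{bs+j}^z` if `i = b ≠ j`,
and `0` otherwise. -/
def Kent {F : Type*} [Field F] (lam : ℕ → F) (s b i j z : ℕ) : F :=
  if i = j then lam (b * s + j) ^ z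
  else if i = b ∧ i ≠ j then -(lam (b * s + j) ^ z)
  else 0

/-- `K_{0,B}^{(t)} = [K_{0,b₁}^{(t)} | ⋯ | K_{0,b_v}^{(t)}]` as an `st × s|B|` matrix:
row `ρ` encodes block row `ρ / t` and inner row `ρ % t`; column `κ` selects the
`κ / s`-th member of `B` and inner column `κ % s`. -/
def KmatB {F : Type*} [Field F] (lam : ℕ → F) (s t : ℕ) (B : Finset ℕ) :
    Matrix (Fin (s * t)) (Fin (s * B.card)) F :=
  Matrix.of fun ρ κ =>
    Kent lam s (enum B ((κ : ℕ) / s)) ((ρ : ℕ) / t) ((κ : ℕ) % s) ((ρ : ℕ) % t)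

/-- The `st × s` matrix `I_s ⊗ L_i^{(t)}`. -/
def IkronL {F : Type*} [Field F] (lam : ℕ → F) (s t i : ℕ) :
    Matrix (Fin (s * t)) (Fin s) F :=
  Matrix.of fun ρ j => if (ρ : ℕ) / t = (j : ℕ) then lam i ^ ((ρ : ℕ) % t) else 0

/-!
A row of polynomials `P_q` of degree less than `t`, written as a vector of coefficients, multiplies
`K_{0,B}^(t)` to a vector of linear combinations of the values of the `P_q` at the nodes
`λ_{bs+j}`. Since `K_{0,B}` is invertible, rows of degree less than `v` attain every such vector
exactly once; hence there is a monic matrix polynomial `G` of degree `v` whose rows are sent to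
zero. The rows of `E` are `X^a e_q` for `a < v`, followed by `X^a G_q` for `a < t - v`, and
`F_i = G(λ_i)`.
-/

section MatrixPolynomial

open Polynomial

variable {R : Type*} [CommRing R] {ι κ m : Type*}

/-- The matrix whose column `k` is `c_k ⊗ (1, μ_k, …, μ_k^(t-1))ᵀ`, where `c_k` is column `k` of
`c`. With `c = 1` and `μ` constant equal to `x` it is `I ⊗ L^(t)(x)`. -/
def blockVandermonde (c : Matrix m κ R) (μ : κ → R) (t : ℕ) : Matrix (m × Fin t) κ R :=
  of fun p k => c p.1 k * μ k ^ (p.2 : ℕ)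

/-- The coefficients of degree less than `t` of a matrix of polynomials; each row of polynomials
is flattened to a row of scalars. -/
def coeffMatrix (A : Matrix ι m R[X]) (t : ℕ) : Matrix ι (m × Fin t) R :=
  of fun r p => (A r p.1).coeff p.2

/-- The matrix whose column `k` is `A(μ_k) c_k`, where `c_k` is column `k` of `c`. -/
noncomputable def evalMul [Fintype m] (A : Matrix ι m R[X]) (c : Matrix m κ R) (μ : κ → R) :
    Matrix ι κ R :=
  of fun r k => ∑ q, (A r q).eval (μ k) * c q k

/-- A square matrix polynomial `G`, monic of degree `v`, with `G(μ_k) c_k = 0` for every column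
`c_k` of `c`. -/
structure IsMonicAnnihilator [Fintype m] [DecidableEq m] (c : Matrix m κ R) (μ : κ → R) (v : ℕ)
    (G : Matrix m m R[X]) : Prop where
  degree_sub_lt : ∀ p q, ((G - (X : R[X]) ^ v • 1) p q).degree < v
  evalMul_eq_zero : evalMul G c μ = 0

lemma blockVandermonde_zero (μ : κ → R) (t : ℕ) :
    blockVandermonde (0 : Matrix m κ R) μ t = 0 := by
  ext p k
  simp [blockVandermonde]

lemma blockVandermonde_one_apply [DecidableEq m] (x : R) (t : ℕ) (p : m × Fin t) (j : m) :
    blockVandermonde 1 (fun _ => x) t p j = if p.1 = j then x ^ (p.2 : ℕ) else 0 := by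
  simp [blockVandermonde, one_apply]

lemma degree_one_apply_lt [DecidableEq m] (p q : m) :
    ((1 : Matrix m m R[X]) p q).degree < (1 : ℕ) := by
  rw [one_apply]
  split_ifs
  · exact degree_one_le.trans_lt (by norm_num)
  · simp

section EvalMul

variable [Fintype m] (c : Matrix m κ R) (μ : κ → R)

lemma evalMul_sub (A A' : Matrix ι m R[X]) :
    evalMul (A - A') c μ = evalMul A c μ - evalMul A' c μ := by
  ext r k
  simp [evalMul, sub_mul, Finset.sum_sub_distrib]

lemma evalMul_smul_apply (f : R[X]) (A : Matrix ι m R[X]) (r : ι) (k : κ) :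
    evalMul (f • A) c μ r k = f.eval (μ k) * evalMul A c μ r k := by
  simp [evalMul, Finset.mul_sum, mul_assoc]

lemma evalMul_map_C_mul {n : Type*} [Fintype n] (N : Matrix ι n R) (A : Matrix n m R[X]) :
    evalMul (N.map C * A) c μ = N * evalMul A c μ := by
  ext r k
  simp only [evalMul, mul_apply, map_apply, of_apply, eval_finsetSum, eval_mul, eval_C,
    Finset.sum_mul, Finset.mul_sum, mul_assoc]
  exact Finset.sum_comm

lemma evalMul_fromRows {ι' : Type*} (A : Matrix ι m R[X]) (A' : Matrix ι' m R[X]) :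
    evalMul (fromRows A A') c μ = fromRows (evalMul A c μ) (evalMul A' c μ) := by
  ext (r | r) k <;> rfl

lemma evalMul_blockVandermonde_X (A : Matrix ι m R[X]) (w : ℕ) :
    evalMul (blockVandermonde A (fun _ => X) w) c μ = blockVandermonde (evalMul A c μ) μ w := by
  ext p k
  simp [evalMul, blockVandermonde, Finset.sum_mul, mul_right_comm]

lemma evalMul_one [DecidableEq m] : evalMul 1 c μ = c := by
  ext r k
  simp [evalMul, one_apply, apply_ite (eval (μ k))]

lemma evalMul_one_const [DecidableEq m] (A : Matrix ι m R[X]) (x : R) :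
    evalMul A 1 (fun _ => x) = A.map (eval x) := by
  ext r k
  simp [evalMul, one_apply]

variable {c μ} {t : ℕ}

lemma coeffMatrix_mul_blockVandermonde {A : Matrix ι m R[X]}
    (hA : ∀ r q, (A r q).degree < t) :
    coeffMatrix A t * blockVandermonde c μ t = evalMul A c μ := by
  ext r k
  simp only [mul_apply, Fintype.sum_prod_type, coeffMatrix, blockVandermonde, evalMul, of_apply]
  refine Finset.sum_congr rfl fun q _ => ?_
  rw [eval_eq_sum, ← sum_fin (fun n a => a * μ k ^ n) (fun n => zero_mul _) (hA r q),
    Finset.sum_mul]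
  exact Finset.sum_congr rfl fun z _ => by ring

lemma exists_degree_lt_evalMul_eq
    (hK : Function.Surjective (blockVandermonde c μ t).vecMul) (T : Matrix ι κ R) :
    ∃ A : Matrix ι m R[X], (∀ r q, (A r q).degree < t) ∧ evalMul A c μ = T := by
  choose N hN using fun r => hK (T r)
  let A : Matrix ι m R[X] := of fun r q => ∑ z : Fin t, C (N r (q, z)) * X ^ (z : ℕ)
  have hdeg : ∀ r q, (A r q).degree < t := fun r q => degree_sum_fin_lt _
  have hcoeff : coeffMatrix A t = of N := by
    ext r ⟨q, z⟩
    simp [A, coeffMatrix, coeff_C_mul, coeff_X_pow, Fin.val_inj]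
  refine ⟨A, hdeg, ?_⟩
  rw [← coeffMatrix_mul_blockVandermonde hdeg, hcoeff]
  exact funext hN

lemma eq_zero_of_evalMul_eq_zero
    (hK : Function.Injective (blockVandermonde c μ t).vecMul)
    {A : Matrix ι m R[X]} (hA : ∀ r q, (A r q).degree < t) (h : evalMul A c μ = 0) : A = 0 := by
  rw [← coeffMatrix_mul_blockVandermonde hA] at h
  ext r q n
  obtain hn | hn := lt_or_ge n t
  · have hrow : coeffMatrix A t r = 0 := hK ((congrFun h r).trans (zero_vecMul _).symm)
    exact congrFun hrow (q, ⟨n, hn⟩)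
  · exact (degree_lt_iff_coeff_zero _ _).1 (hA r q) n hn

end EvalMul

namespace IsMonicAnnihilator

variable [Fintype m] [DecidableEq m] {c : Matrix m κ R} {μ : κ → R} {v : ℕ}

lemma exists_of_surjective (hK : Function.Surjective (blockVandermonde c μ v).vecMul) :
    ∃ G, IsMonicAnnihilator c μ v G := by
  obtain ⟨L, hL, hLc⟩ := exists_degree_lt_evalMul_eq hK
    (evalMul ((X : R[X]) ^ v • (1 : Matrix m m R[X])) c μ)
  refine ⟨(X : R[X]) ^ v • 1 - L, fun p q => ?_, ?_⟩
  · simpa using hL p q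
  · rw [evalMul_sub, hLc, sub_self]

variable {G : Matrix m m R[X]}

lemma coeff_of_le (hG : IsMonicAnnihilator c μ v G) {n : ℕ} (hn : v ≤ n) (p q : m) :
    (G p q).coeff n = if n = v then (1 : Matrix m m R) p q else 0 := by
  have h := (degree_lt_iff_coeff_zero _ _).1 (hG.degree_sub_lt p q) n hn
  have hcoeff : (G p q).coeff n = ((X : R[X]) ^ v * (1 : Matrix m m R[X]) p q).coeff n := by
    simpa [sub_eq_zero] using h
  rw [hcoeff]
  by_cases hpq : p = q <;> simp [one_apply, hpq, coeff_X_pow]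

lemma degree_lt (hG : IsMonicAnnihilator c μ v G) (p q : m) : (G p q).degree < (v + 1 : ℕ) := by
  refine (degree_lt_iff_coeff_zero _ _).2 fun n hn => ?_
  rw [hG.coeff_of_le (by omega), if_neg (by omega)]

lemma eq_map_C_coeff_mul (hG : IsMonicAnnihilator c μ v G)
    (hK : Function.Injective (blockVandermonde c μ v).vecMul)
    {A : Matrix ι m R[X]} (hA : ∀ r q, (A r q).degree < (v + 1 : ℕ)) (h : evalMul A c μ = 0) :
    A = (A.map (coeff · v)).map C * G := by
  refine sub_eq_zero.1 (eq_zero_of_evalMul_eq_zero hK (fun r q => ?_) ?_)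
  · refine (degree_lt_iff_coeff_zero _ _).2 fun n hn => ?_
    simp only [Matrix.sub_apply, mul_apply, map_apply, coeff_sub, finsetSum_coeff, coeff_C_mul,
      hG.coeff_of_le hn]
    obtain rfl | hlt := hn.eq_or_lt
    · simp [one_apply]
    · simp [hlt.ne', (degree_lt_iff_coeff_zero _ _).1 (hA r q) n hlt]
  · rw [evalMul_sub, evalMul_map_C_mul, h, hG.evalMul_eq_zero, Matrix.mul_zero, sub_zero]

/-- Take `W` of degree less than `v` with `(μ_k - x) W(μ_k) c_k = c_k` for all `k`. Then
`1 - (X - x) W` annihilates `c` in degree at most `v`, so it is a scalar matrix times `G`;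
evaluating at `x` gives a left inverse of `G(x)`. -/
lemma isUnit_map_eval (hG : IsMonicAnnihilator c μ v G)
    (hK : Function.Bijective (blockVandermonde c μ v).vecMul) {x : R}
    (hx : ∀ k, IsUnit (μ k - x)) : IsUnit (G.map (eval x)) := by
  obtain ⟨W, hW, hWc⟩ := exists_degree_lt_evalMul_eq hK.surjective
    (of fun q k => Ring.inverse (μ k - x) * c q k)
  set A : Matrix m m R[X] := 1 - (X - C x) • W
  have hdeg : ∀ p q, (A p q).degree < (v + 1 : ℕ) := fun p q => by
    refine (degree_lt_iff_coeff_zero _ _).2 fun n hn => ?_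
    obtain ⟨n, rfl⟩ := Nat.exists_eq_add_of_le' (Nat.one_le_of_lt hn)
    have hW_coeff := (degree_lt_iff_coeff_zero _ _).1 (hW p q)
    have hone_coeff : ((1 : Matrix m m R[X]) p q).coeff (n + 1) = 0 :=
      (degree_lt_iff_coeff_zero _ _).1 (degree_one_apply_lt p q) _ (by omega)
    simp [A, sub_mul, hone_coeff, hW_coeff n (by omega), hW_coeff (n + 1) (by omega)]
  have hzero : evalMul A c μ = 0 := by
    ext q k
    rw [evalMul_sub, evalMul_one, Matrix.sub_apply, evalMul_smul_apply, hWc]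
    simp [Ring.mul_inverse_cancel_left _ _ (hx k)]
  have hA_eval : A.map (eval x) = 1 := by
    ext p q
    simp [A, one_apply, apply_ite (eval x)]
  refine .of_mul_eq_one_right (A.map (coeff · v)) ?_
  rw [← evalMul_one_const, ← evalMul_map_C_mul, ← hG.eq_map_C_coeff_mul hK.injective hdeg hzero,
    evalMul_one_const, hA_eval]

end IsMonicAnnihilator

lemma degree_blockVandermonde_X_lt {A : Matrix ι m R[X]} {n : ℕ}
    (hA : ∀ r q, (A r q).degree < (n + 1 : ℕ)) (w : ℕ) (p : ι × Fin w) (q : m) :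
    (blockVandermonde A (fun _ => X) w p q).degree < (n + w : ℕ) := by
  refine (degree_lt_iff_coeff_zero _ _).2 fun d hd => ?_
  simp only [blockVandermonde, of_apply, coeff_mul_X_pow']
  split_ifs
  · exact (degree_lt_iff_coeff_zero _ _).1 (hA p.1 q) _ (by omega)
  · rfl

/-- The polynomial rows `X^a e_q` with `a < v`, above the rows `X^a G_q` with `a < w`. -/
noncomputable def shiftedRows [DecidableEq m] (G : Matrix m m R[X]) (v w : ℕ) :
    Matrix (m × Fin v ⊕ m × Fin w) m R[X] :=
  fromRows (blockVandermonde 1 (fun _ => X) v) (blockVandermonde G (fun _ => X) w)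

section ShiftedRows

variable [DecidableEq m] {G : Matrix m m R[X]} {v : ℕ}

lemma degree_shiftedRows_lt (hG : ∀ p q, (G p q).degree < (v + 1 : ℕ)) (w : ℕ)
    (r : m × Fin v ⊕ m × Fin w) (q : m) : (shiftedRows G v w r q).degree < (v + w : ℕ) := by
  obtain p | p := r
  · exact (degree_blockVandermonde_X_lt (n := 0) degree_one_apply_lt v p q).trans_le
      (by exact_mod_cast by omega)
  · exact degree_blockVandermonde_X_lt hG w p q

lemma coeffMatrix_shiftedRows_mul [Fintype m] (hG : ∀ p q, (G p q).degree < (v + 1 : ℕ)) (w : ℕ)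
    (c : Matrix m κ R) (μ : κ → R) :
    coeffMatrix (shiftedRows G v w) (v + w) * blockVandermonde c μ (v + w) =
      fromRows (blockVandermonde c μ v) (blockVandermonde (evalMul G c μ) μ w) := by
  rw [coeffMatrix_mul_blockVandermonde (degree_shiftedRows_lt hG w), shiftedRows,
    evalMul_fromRows, evalMul_blockVandermonde_X, evalMul_blockVandermonde_X, evalMul_one]

end ShiftedRows

theorem exists_mul_blockVandermonde_eq_fromRows [Fintype m] [DecidableEq m] {c : Matrix m κ R}
    {μ : κ → R} {v : ℕ} (hK : Function.Bijective (blockVandermonde c μ v).vecMul) (w : ℕ) :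
    ∃ E : Matrix (m × Fin v ⊕ m × Fin w) (m × Fin (v + w)) R,
      E * blockVandermonde c μ (v + w) = fromRows (blockVandermonde c μ v) 0 ∧
      ∀ x, (∀ k, IsUnit (μ k - x)) → ∃ T : Matrix m m R, IsUnit T ∧
        E * blockVandermonde (1 : Matrix m m R) (fun _ => x) (v + w) =
          fromRows (blockVandermonde 1 (fun _ => x) v) (blockVandermonde T (fun _ => x) w) := by
  obtain ⟨G, hG⟩ := IsMonicAnnihilator.exists_of_surjective hK.surjective
  refine ⟨coeffMatrix (shiftedRows G v w) (v + w), ?_,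
    fun x hx => ⟨G.map (eval x), hG.isUnit_map_eval hK hx, ?_⟩⟩
  · rw [coeffMatrix_shiftedRows_mul hG.degree_lt, hG.evalMul_eq_zero, blockVandermonde_zero]
  · rw [coeffMatrix_shiftedRows_mul hG.degree_lt, evalMul_one_const]

end MatrixPolynomial

section KernelMatrix

/-- The enumeration of the rows of `U` stacked over `L`, where `U` has `s` blocks of `v` rows and
`L` has `s` blocks of `w` rows. -/
def stackEquiv (s v w : ℕ) : Fin (s * (v + w)) ≃ Fin s × Fin v ⊕ Fin s × Fin w :=
  (finCongr (mul_add s v w)).trans <|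
    finSumFinEquiv.symm.trans (finProdFinEquiv.symm.sumCongr finProdFinEquiv.symm)

lemma stackEquiv_of_lt {s v w : ℕ} {ρ : Fin (s * (v + w))} (h : (ρ : ℕ) < s * v) :
    stackEquiv s v w ρ = .inl (finProdFinEquiv.symm ⟨ρ, h⟩) := by
  have hcast : finCongr (mul_add s v w) ρ = Fin.castAdd (s * w) ⟨ρ, h⟩ := rfl
  rw [stackEquiv, Equiv.trans_apply, Equiv.trans_apply, hcast, finSumFinEquiv_symm_apply_castAdd]
  rfl

lemma stackEquiv_of_le {s v w : ℕ} {ρ : Fin (s * (v + w))} (h : s * v ≤ (ρ : ℕ)) :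
    stackEquiv s v w ρ = .inr (finProdFinEquiv.symm
      ⟨ρ - s * v, Nat.sub_lt_left_of_lt_add h (ρ.2.trans_eq (mul_add s v w))⟩) := by
  have hcast : finCongr (mul_add s v w) ρ = Fin.natAdd (s * v)
      ⟨ρ - s * v, Nat.sub_lt_left_of_lt_add h (ρ.2.trans_eq (mul_add s v w))⟩ :=
    Fin.ext (Nat.add_sub_cancel' h).symm
  rw [stackEquiv, Equiv.trans_apply, Equiv.trans_apply, hcast, finSumFinEquiv_symm_apply_natAdd]
  rfl

lemma enum_mem {B : Finset ℕ} {m : ℕ} (hm : m < B.card) : enum B m ∈ B := by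
  have hlen : m < (B.sort (· ≤ ·)).length := by rwa [Finset.length_sort]
  rw [enum, List.getD_eq_getElem _ _ hlen]
  exact (Finset.mem_sort _).1 (List.getElem_mem hlen)

variable {F : Type*} (lam : ℕ → F) (s : ℕ) (B : Finset ℕ)

/-- The element `λ_{bs+j}` whose powers appear in column `κ` of `K_{0,B}^(t)`. -/
def kernelNode (κ : Fin (s * B.card)) : F := lam (enum B (κ / s) * s + κ % s)

variable {lam s B} in
lemma kernelNode_ne {x : F} (hx : ∀ b ∈ B, ∀ j < s, x ≠ lam (b * s + j))
    (κ : Fin (s * B.card)) : kernelNode lam s B κ ≠ x :=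
  (hx _ (enum_mem (Nat.div_lt_of_lt_mul κ.2)) _
    (Nat.mod_lt _ (Nat.pos_of_mul_pos_right κ.pos))).symm

variable [Field F]

/-- The signs `1`, `-1`, `0` multiplying the vectors `L^(t)` in the blocks of `K_{0,B}^(t)`; they
are the entries of `Kent` at exponent `0`. -/
def kernelCoeff : Matrix (Fin s) (Fin (s * B.card)) F :=
  of fun q κ => Kent lam s (enum B (κ / s)) q (κ % s) 0

lemma blockVandermonde_kernel_apply (t : ℕ) (p : Fin s × Fin t) (κ : Fin (s * B.card)) :
    blockVandermonde (kernelCoeff lam s B) (kernelNode lam s B) t p κ =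
      Kent lam s (enum B (κ / s)) p.1 (κ % s) p.2 := by
  simp only [blockVandermonde, kernelCoeff, kernelNode, Kent, of_apply]
  split_ifs <;> simp

lemma KmatB_eq_submatrix (t : ℕ) :
    KmatB lam s t B = (blockVandermonde (kernelCoeff lam s B) (kernelNode lam s B) t).submatrix
      finProdFinEquiv.symm id := by
  ext ρ κ
  rw [submatrix_apply, blockVandermonde_kernel_apply]
  rfl

lemma IkronL_eq_submatrix (t i : ℕ) :
    IkronL lam s t i =
      (blockVandermonde (1 : Matrix (Fin s) (Fin s) F) (fun _ => lam i) t).submatrix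
        finProdFinEquiv.symm id := by
  ext ρ j
  simp only [submatrix_apply, id, blockVandermonde_one_apply, Fin.ext_iff]
  rfl

variable {lam s B} in
lemma bijective_vecMul_blockVandermonde_kernel (hK : (KmatB lam s B.card B).det ≠ 0) :
    Function.Bijective
      (blockVandermonde (kernelCoeff lam s B) (kernelNode lam s B) B.card).vecMul := by
  have hunit : IsUnit (KmatB lam s B.card B) := (isUnit_iff_isUnit_det _).2 hK.isUnit
  have hcomp : (blockVandermonde (kernelCoeff lam s B) (kernelNode lam s B) B.card).vecMul =
      (KmatB lam s B.card B).vecMul ∘ (· ∘ finProdFinEquiv.symm) := by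
    funext u
    simp [KmatB_eq_submatrix, submatrix_vecMul_equiv, Function.comp_assoc]
  rw [hcomp]
  exact .comp ⟨vecMul_injective_iff_isUnit.2 hunit, vecMul_surjective_iff_isUnit.2 hunit⟩
    (finProdFinEquiv.arrowCongr (Equiv.refl F)).bijective

end KernelMatrix

lemma exists_nat_extension {α : Type*} [Zero α] {s : ℕ} (M : Matrix (Fin s) (Fin s) α) :
    ∃ f : ℕ → ℕ → α, ∀ p q : Fin s, f p q = M p q :=
  ⟨fun p q => if h : p < s ∧ q < s then M ⟨p, h.1⟩ ⟨q, h.2⟩ else 0, by simp⟩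

lemma mul_add_lt_mul {b j n s : ℕ} (hb : b < n) (hj : j < s) : b * s + j < n * s :=
  calc
    b * s + j < b * s + s := Nat.add_lt_add_left hj _
    _ = (b + 1) * s := (Nat.add_one_mul b s).symm
    _ ≤ n * s := Nat.mul_le_mul_right s hb

theorem statement6_general {F : Type*} [Field F] (lam : ℕ → F) {s t : ℕ} {B : Finset ℕ}
    (ht : B.card ≤ t) (hKinv : (KmatB lam s B.card B).det ≠ 0) :
    ∃ E : Matrix (Fin (s * t)) (Fin (s * t)) F,
      (∀ (ρ : Fin (s * t)) (κ : Fin (s * B.card)),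
        (E * KmatB lam s t B) ρ κ =
          if (ρ : ℕ) < s * B.card then
            Kent lam s (enum B ((κ : ℕ) / s)) ((ρ : ℕ) / B.card) ((κ : ℕ) % s)
              ((ρ : ℕ) % B.card)
          else 0) ∧
      (∀ i, (∀ b ∈ B, ∀ j < s, lam i ≠ lam (b * s + j)) →
        ∃ Fi : ℕ → ℕ → F,
          (Matrix.of fun p q : Fin s => Fi (p : ℕ) (q : ℕ)).det ≠ 0 ∧
          ∀ (ρ : Fin (s * t)) (j : Fin s),
            (E * IkronL lam s t i) ρ j =
              if (ρ : ℕ) < s * B.card then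
                (if (ρ : ℕ) / B.card = (j : ℕ) then lam i ^ ((ρ : ℕ) % B.card) else 0)
              else
                Fi (((ρ : ℕ) - s * B.card) / (t - B.card)) (j : ℕ) *
                  lam i ^ (((ρ : ℕ) - s * B.card) % (t - B.card))) := by
  obtain ⟨w, rfl⟩ := Nat.exists_eq_add_of_le ht
  obtain ⟨E, hE, hE_node⟩ := exists_mul_blockVandermonde_eq_fromRows
    (bijective_vecMul_blockVandermonde_kernel hKinv) w
  refine ⟨E.submatrix (stackEquiv s B.card w) finProdFinEquiv.symm, fun ρ κ => ?_,
    fun i hi => ?_⟩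
  · rw [KmatB_eq_submatrix, submatrix_mul_equiv, hE, submatrix_apply]
    split_ifs with hρ
    · rw [stackEquiv_of_lt hρ, fromRows_apply_inl, id, blockVandermonde_kernel_apply]
      rfl
    · rw [stackEquiv_of_le (not_lt.1 hρ), fromRows_apply_inr, Matrix.zero_apply]
  · obtain ⟨T, hT, hET⟩ := hE_node (lam i) fun κ => (sub_ne_zero.2 (kernelNode_ne hi κ)).isUnit
    obtain ⟨Fi, hFi⟩ := exists_nat_extension T
    refine ⟨Fi, ?_, fun ρ j => ?_⟩
    · have hFiT : (of fun p q : Fin s => Fi p q) = T := Matrix.ext hFi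
      exact hFiT ▸ ((isUnit_iff_isUnit_det _).1 hT).ne_zero
    · rw [IkronL_eq_submatrix, submatrix_mul_equiv, hET, submatrix_apply, add_tsub_cancel_left]
      by_cases hρ : (ρ : ℕ) < s * B.card
      · simp only [if_pos hρ, stackEquiv_of_lt hρ, fromRows_apply_inl, id,
          blockVandermonde_one_apply, Fin.ext_iff]
        rfl
      · rw [if_neg hρ, stackEquiv_of_le (not_lt.1 hρ), fromRows_apply_inr]
        exact congrArg (· * _) (hFi _ j).symm

/-- Lemma 5 of the paper: for nonempty `B ⊆ [s]` with `|B| = v < t`,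
if the `λ_i` are pairwise distinct and `K_{0,B}` is invertible, then there is an
`st × st` matrix `E` such that (i) `E · K_{0,B}^{(t)}` is `K_{0,B}` stacked over a zero
matrix, and (ii) for every `i < ns` with `i ∉ {bs + j : b ∈ B, j ∈ [s]}` there is an
invertible `s × s` matrix `F_i` with `E · (I_s ⊗ L_i^{(t)})` equal to `I_s ⊗ L_i^{(v)}`
stacked over `F_i ⊗ L_i^{(t−v)}`. -/
theorem statement6 (F : Type*) [Field F] [Fintype F] (n k d s : ℕ)
    (hk : 1 ≤ k) (hkn : k < n) (hd₁ : k + 1 ≤ d) (hd₂ : d ≤ n - 1)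
    (hs : s = d - k + 1) (hdiv : s ∣ n)
    (lam : ℕ → F)
    (hdist : ∀ i < n * s, ∀ j < n * s, lam i = lam j → i = j)
    (B : Finset ℕ) (hBsub : B ⊆ Finset.range s) (hBne : B.Nonempty)
    (t : ℕ) (ht : B.card < t)
    (hKinv : (KmatB lam s B.card B).det ≠ 0) :
    ∃ E : Matrix (Fin (s * t)) (Fin (s * t)) F,
      (∀ (ρ : Fin (s * t)) (κ : Fin (s * B.card)),
        (E * KmatB lam s t B) ρ κ =
          if (ρ : ℕ) < s * B.card then
            Kent lam s (enum B ((κ : ℕ) / s)) ((ρ : ℕ) / B.card) ((κ : ℕ) % s)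
              ((ρ : ℕ) % B.card)
          else 0) ∧
      (∀ i < n * s, (∀ b ∈ B, ∀ j < s, i ≠ b * s + j) →
        ∃ Fi : ℕ → ℕ → F,
          (Matrix.of fun p q : Fin s => Fi (p : ℕ) (q : ℕ)).det ≠ 0 ∧
          ∀ (ρ : Fin (s * t)) (j : Fin s),
            (E * IkronL lam s t i) ρ j =
              if (ρ : ℕ) < s * B.card then
                (if (ρ : ℕ) / B.card = (j : ℕ) then lam i ^ ((ρ : ℕ) % B.card) else 0)
              else
                Fi (((ρ : ℕ) - s * B.card) / (t - B.card)) (j : ℕ) *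
                  lam i ^ (((ρ : ℕ) - s * B.card) % (t - B.card))) := by
  have hsn : s ≤ n := by omega
  exact (statement6_general lam ht.le hKinv).imp fun E hE =>
    ⟨hE.1, fun i hi hiB => hE.2 i fun b hb j hj heq => hiB b hb j hj <|
      hdist i hi _ (mul_add_lt_mul ((Finset.mem_range.1 (hBsub hb)).trans_le hsn) hj) heq⟩
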